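/- Let p be an odd prime with p > 4. Then (p^2/2^5) · Σ_{θ=1}^{p-1} 1/sin^4(πθ/p) = (p^6 + 10p^4 - 11p^2)/1440. (This is the genus-3 case of the degree formula of Corollary 5.4.) -/

import Mathlib

open Real

lemma aux_S (N : ℂ) (z : ℂ) (n : ℕ) :
    (z - 1) ^ 2 * ∑ j ∈ Finset.range n, (j : ℂ) * (N - j) * z ^ j
      + 2 * z * ∑ j ∈ Finset.range n, z ^ j
      = ((n : ℂ) - 1) * (N - n + 1) * z ^ (n + 1) - n * (N - n) * z ^ n + (N + 1) * z := by
  induction n with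
  | zero => simp; ring
  | succ n ih =>
    rw [Finset.sum_range_succ, Finset.sum_range_succ, mul_add, mul_add]
    push_cast
    linear_combination ih

lemma aux_S' (p : ℕ) (z : ℂ) (hz : z ^ p = 1) (h1 : z ≠ 1) :
    (z - 1) ^ 2 * ∑ j ∈ Finset.range p, (j : ℂ) * (p - j) * z ^ j = 2 * p * z := by
  have h := aux_S p z p
  have hg : ∑ j ∈ Finset.range p, z ^ j = 0 := by
    rw [geom_sum_eq h1, hz]; simp
  rw [hg, pow_succ z p, hz] at h
  linear_combination h

lemma aux_sum1 (N : ℂ) (n : ℕ) :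
    ∑ j ∈ Finset.range n, (j : ℂ) * (N - j) =
      N * (n * (n - 1) / 2) - n * (n - 1) * (2 * n - 1) / 6 := by
  induction n with
  | zero => simp
  | succ n ih => rw [Finset.sum_range_succ, ih]; push_cast; ring

lemma aux_sum2 (N : ℂ) (n : ℕ) :
    ∑ j ∈ Finset.range n, ((j : ℂ) * (N - j)) ^ 2 =
      N ^ 2 * (n * (n - 1) * (2 * n - 1) / 6) - 2 * N * (n * (n - 1) / 2) ^ 2
        + n * (n - 1) * (2 * n - 1) * (3 * n ^ 2 - 3 * n - 1) / 30 := by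
  induction n with
  | zero => simp
  | succ n ih => rw [Finset.sum_range_succ, ih]; push_cast; ring

lemma aux_orth (p : ℕ) (ζ : ℂ) (hζ : IsPrimitiveRoot ζ p) (m : ℕ) :
    ∑ k ∈ Finset.range p, (ζ ^ m) ^ k = if p ∣ m then (p : ℂ) else 0 := by
  split_ifs with h
  · rw [(hζ.pow_eq_one_iff_dvd m).2 h]; simp
  · have h1 : ζ ^ m ≠ 1 := fun h' => h ((hζ.pow_eq_one_iff_dvd m).1 h')
    rw [geom_sum_eq h1, ← pow_mul, mul_comm, pow_mul, hζ.pow_eq_one]; simp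

lemma aux_inner (p : ℕ) (i : ℕ) (hi : i < p) :
    ∑ j ∈ Finset.range p, (j : ℂ) * (p - j) * (if p ∣ i + j then (p : ℂ) else 0)
      = i * (p - i) * p := by
  rcases Nat.eq_zero_or_pos i with rfl | h0
  · simp only [Nat.cast_zero, zero_mul]
    apply Finset.sum_eq_zero
    intro j hj
    rw [Finset.mem_range] at hj
    rcases Nat.eq_zero_or_pos j with rfl | h
    · simp
    · rw [if_neg, mul_zero]
      rw [zero_add]
      exact Nat.not_dvd_of_pos_of_lt h hj
  · rw [Finset.sum_eq_single (p - i)]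
    · rw [if_pos (by rw [Nat.add_sub_cancel' hi.le]), Nat.cast_sub hi.le]; ring
    · intro j hj hne
      rw [Finset.mem_range] at hj
      rw [if_neg, mul_zero]
      rintro ⟨c, hc⟩
      have : c < 2 := by
        by_contra hh
        have : p * 2 ≤ p * c := Nat.mul_le_mul_left _ (by omega)
        omega
      interval_cases c <;> omega
    · intro h; exact absurd (Finset.mem_range.2 (by omega)) h

lemma aux_parseval (p : ℕ) (ζ : ℂ) (hζ : IsPrimitiveRoot ζ p) :
    ∑ k ∈ Finset.range p, (∑ j ∈ Finset.range p, (j : ℂ) * (p - j) * (ζ ^ k) ^ j) ^ 2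
      = p * ∑ j ∈ Finset.range p, ((j : ℂ) * (p - j)) ^ 2 := by
  simp_rw [sq (∑ j ∈ Finset.range p, (j : ℂ) * (p - j) * (ζ ^ _) ^ j), Finset.sum_mul_sum]
  rw [Finset.sum_comm, Finset.mul_sum]
  apply Finset.sum_congr rfl
  intro i hi
  rw [Finset.sum_comm]
  have := aux_inner p i (Finset.mem_range.1 hi)
  calc _ = ∑ j ∈ Finset.range p, (i : ℂ) * (p - i) * ((j : ℂ) * (p - j) *
            ∑ k ∈ Finset.range p, (ζ ^ (i + j)) ^ k) := by
        apply Finset.sum_congr rfl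
        intro j _
        rw [Finset.mul_sum, Finset.mul_sum]
        apply Finset.sum_congr rfl
        intro k _
        ring
    _ = _ := by
        simp_rw [aux_orth p ζ hζ]
        rw [← Finset.mul_sum, this]; ring

lemma aux_sin (x : ℂ) : (Complex.exp (2 * x * Complex.I) - 1) ^ 2
    = -4 * Complex.sin x ^ 2 * Complex.exp (2 * x * Complex.I) := by
  have h1 : Complex.exp (2 * x * Complex.I) = Complex.exp (x * Complex.I) ^ 2 := by
    rw [← Complex.exp_nat_mul]; congr 1; push_cast; ring
  have h2 : Complex.exp (-x * Complex.I) * Complex.exp (x * Complex.I) = 1 := by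
    rw [← Complex.exp_add]; simp
  rw [h1, Complex.sin]
  set a := Complex.exp (x * Complex.I)
  set b := Complex.exp (-x * Complex.I)
  have : -4 * ((b - a) * Complex.I / 2) ^ 2 * a ^ 2 = (b * a - a ^ 2) ^ 2 := by
    linear_combination (-(b - a) ^ 2 * a ^ 2) * Complex.I_sq
  rw [this, h2]; ring

theorem stmt_8 (p : ℕ) (hp : p.Prime) (hodd : Odd p) (hp4 : 4 < p) :
    ((p : ℝ) ^ 2 / 2 ^ 5) * ∑ θ ∈ Finset.Icc 1 (p - 1), 1 / Real.sin (π * θ / p) ^ 4 =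
      ((p : ℝ) ^ 6 + 10 * p ^ 4 - 11 * p ^ 2) / 1440 := by
  have hp0 : p ≠ 0 := by omega
  have hpC : (p : ℂ) ≠ 0 := Nat.cast_ne_zero.2 hp0
  obtain ⟨ζ, hζdef⟩ : ∃ ζ, ζ = Complex.exp (2 * π * Complex.I / p) := ⟨_, rfl⟩
  have hζ : IsPrimitiveRoot ζ p := hζdef ▸ Complex.isPrimitiveRoot_exp p hp0
  have hset : Finset.range p = insert 0 (Finset.Icc 1 (p - 1)) := by
    ext x; simp only [Finset.mem_range, Finset.mem_insert, Finset.mem_Icc]; omega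
  have hP := aux_parseval p ζ hζ
  rw [aux_sum2] at hP
  have hsplit : ∀ f : ℕ → ℂ, ∑ k ∈ Finset.range p, f k
      = f 0 + ∑ k ∈ Finset.Icc 1 (p - 1), f k := by
    intro f; rw [hset, Finset.sum_insert (by simp)]
  rw [hsplit (fun k => (∑ j ∈ Finset.range p, (j : ℂ) * (p - j) * (ζ ^ k) ^ j) ^ 2)] at hP
  simp only [pow_zero, one_pow, mul_one] at hP
  rw [aux_sum1] at hP
  have hterm : ∀ k ∈ Finset.Icc 1 (p - 1),
      (∑ j ∈ Finset.range p, (j : ℂ) * (p - j) * (ζ ^ k) ^ j) ^ 2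
        = (p : ℂ) ^ 2 / 4 * (1 / Complex.sin (π * k / p) ^ 4) := by
    intro k hk
    rw [Finset.mem_Icc] at hk
    have hz : (ζ ^ k) ^ p = 1 := by rw [← pow_mul, mul_comm, pow_mul, hζ.pow_eq_one, one_pow]
    have h1 : ζ ^ k ≠ 1 := hζ.pow_ne_one_of_pos_of_lt (by omega) (by omega)
    have h := aux_S' p _ hz h1
    have hs := aux_sin (π * k / p)
    have he : Complex.exp (2 * (π * k / p) * Complex.I) = ζ ^ k := by
      rw [hζdef, ← Complex.exp_nat_mul]; congr 1; ring
    rw [he] at hs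
    have hzne : ζ ^ k ≠ 0 := pow_ne_zero _ (hζ.ne_zero hp0)
    have hsne : Complex.sin (π * k / p) ≠ 0 := by
      intro h0
      rw [h0] at hs
      apply h1
      have : (ζ ^ k - 1) ^ 2 = 0 := by rw [hs]; ring
      exact sub_eq_zero.1 (pow_eq_zero_iff (two_ne_zero) |>.1 this)
    rw [hs] at h
    generalize (∑ j ∈ Finset.range p, (j : ℂ) * (p - j) * (ζ ^ k) ^ j) = S at *
    generalize Complex.sin (π * k / p) = s at *
    have h3 : -2 * s ^ 2 * S = p := by
      apply mul_right_cancel₀ hzne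
      linear_combination h / 2
    rw [← h3]
    field_simp
    ring
  rw [Finset.sum_congr rfl hterm, ← Finset.mul_sum] at hP
  have key : ((p : ℂ) ^ 2 / 2 ^ 5) *
      ∑ θ ∈ Finset.Icc 1 (p - 1), 1 / Complex.sin (π * θ / p) ^ 4 =
      ((p : ℂ) ^ 6 + 10 * p ^ 4 - 11 * p ^ 2) / 1440 := by
    linear_combination hP / 8
  apply Complex.ofReal_injective
  push_cast
  exact key
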